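/- arXiv:math/0306390 — 2 statements merged into one kernel-verified Lean document; each statement's English description precedes it below -/
import Mathlib

section
/- Let A be an open subset of ℝ⁴ (coordinates (t,x₁,x₂,x₃)) and let μ : A → ℂ be a C² map satisfying on A the equations ∂_vμ + i·μ·∂_{q₂}μ = 0 and ∂_{q̄₂}μ − i·μ·∂_wμ = 0, where ∂_v = ½(∂_t + ∂₁), ∂_w = ½(∂₁ − ∂_t), ∂_{q₂} = ½(∂₂ − i∂₃), ∂_{q̄₂} = ½(∂₂ + i∂₃). Then on A: −∂_t²μ + ∂₁²μ + ∂₂²μ + ∂₃²μ = 0 and −(∂_tμ)² + (∂₁μ)² + (∂₂μ)² + (∂₃μ)² = 0; that is, μ is a harmonic morphism from Minkowski 4-space to ℂ. -/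
noncomputable section

/-- Partial derivative in the `i`-th coordinate direction of a map `ℝ⁴ → ℂ`;
coordinates on `ℝ⁴` are `(t, x₁, x₂, x₃)`, with `t` the coordinate of index `0`. -/
def pd (i : Fin 4) (f : (Fin 4 → ℝ) → ℂ) (y : Fin 4 → ℝ) : ℂ :=
  fderiv ℝ f y (Pi.single i 1)

lemma pd_hasFDerivAt {A : Set (Fin 4 → ℝ)} (hA : IsOpen A)
    {μ : (Fin 4 → ℝ) → ℂ} (hμ : ContDiffOn ℝ 2 μ A) {y : Fin 4 → ℝ} (hy : y ∈ A) (j : Fin 4) :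
    DifferentiableAt ℝ (pd j μ) y := by
  have h2 : ContDiffAt ℝ 2 μ y := hμ.contDiffAt (hA.mem_nhds hy)
  have h1 : ContDiffAt ℝ 1 (fderiv ℝ μ) y := h2.fderiv_right (by norm_num)
  have h3 : DifferentiableAt ℝ (fderiv ℝ μ) y := h1.differentiableAt (by norm_num)
  exact h3.clm_apply (differentiableAt_const _)

lemma pd_pd_comm {A : Set (Fin 4 → ℝ)} (hA : IsOpen A)
    {μ : (Fin 4 → ℝ) → ℂ} (hμ : ContDiffOn ℝ 2 μ A) {y : Fin 4 → ℝ} (hy : y ∈ A) (i j : Fin 4) :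
    pd i (pd j μ) y = pd j (pd i μ) y := by
  have h2 : ContDiffAt ℝ 2 μ y := hμ.contDiffAt (hA.mem_nhds hy)
  have h1 : ContDiffAt ℝ 1 (fderiv ℝ μ) y := h2.fderiv_right (by norm_num)
  have h3 : DifferentiableAt ℝ (fderiv ℝ μ) y := h1.differentiableAt (by norm_num)
  have key : ∀ i j : Fin 4, pd i (pd j μ) y
      = fderiv ℝ (fderiv ℝ μ) y (Pi.single i 1) (Pi.single j 1) := by
    intro i j
    have h := h3.hasFDerivAt.clm_apply (hasFDerivAt_const (Pi.single j (1 : ℝ)) y)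
    change fderiv ℝ (fun z => fderiv ℝ μ z (Pi.single j 1)) y (Pi.single i 1) = _
    rw [h.fderiv]
    simp
  have hs : IsSymmSndFDerivAt ℝ μ y := h2.isSymmSndFDerivAt (by simp)
  rw [key, key]
  exact hs _ _

/-- Differentiating `(a + c b) / 2 + k μ (d + e f) / 2 = 0`. -/
lemma pd_equation {A : Set (Fin 4 → ℝ)} (hA : IsOpen A)
    {m a b d f : (Fin 4 → ℝ) → ℂ} {y : Fin 4 → ℝ} (hy : y ∈ A) (c k e : ℂ)
    (hm : DifferentiableAt ℝ m y) (ha : DifferentiableAt ℝ a y) (hb : DifferentiableAt ℝ b y)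
    (hd : DifferentiableAt ℝ d y) (hf : DifferentiableAt ℝ f y)
    (h : ∀ z ∈ A, (a z + c * b z) + k * (m z * (d z + e * f z)) = 0) (i : Fin 4) :
    (pd i a y + c * pd i b y) + k * (pd i m y * (d y + e * f y)
      + m y * (pd i d y + e * pd i f y)) = 0 := by
  have H := (ha.hasFDerivAt.add (hb.hasFDerivAt.const_mul c)).add
    ((hm.hasFDerivAt.mul (hd.hasFDerivAt.add (hf.hasFDerivAt.const_mul e))).const_mul k)
  have h0 : HasFDerivAt (fun _ : Fin 4 → ℝ => (0 : ℂ)) (0 : (Fin 4 → ℝ) →L[ℝ] ℂ) y :=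
    hasFDerivAt_const _ _
  have H' := h0.congr_of_eventuallyEq
    (Filter.eventually_of_mem (hA.mem_nhds hy) (fun z hz => h z hz))
  have E := congrArg (fun L : (Fin 4 → ℝ) →L[ℝ] ℂ => L (Pi.single i 1)) (H.unique H')
  simp at E
  simp only [pd]
  linear_combination E

/-- Proposition 6.4: a `C²` map `μ` on an open subset of Minkowski `ℝ⁴` satisfying the
shear-free ray congruence equations `∂_v μ + i μ ∂_{q₂}μ = 0`, `∂_{q̄₂}μ − i μ ∂_w μ = 0`
(with `∂_v = ½(∂_t + ∂₁)`, `∂_w = ½(∂₁ − ∂_t)`, `∂_{q₂} = ½(∂₂ − i∂₃)`,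
`∂_{q̄₂} = ½(∂₂ + i∂₃)`) is a harmonic morphism from Minkowski space:
`−∂ₜ²μ + ∂₁²μ + ∂₂²μ + ∂₃²μ = 0` and `−(∂ₜμ)² + (∂₁μ)² + (∂₂μ)² + (∂₃μ)² = 0`. -/
theorem sfr_representative_is_harmonic_morphism
    (A : Set (Fin 4 → ℝ)) (hA : IsOpen A)
    (μ : (Fin 4 → ℝ) → ℂ) (hμ : ContDiffOn ℝ 2 μ A)
    (heq1 : ∀ y ∈ A,
      (pd 0 μ y + pd 1 μ y) / 2
        + Complex.I * μ y * ((pd 2 μ y - Complex.I * pd 3 μ y) / 2) = 0)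
    (heq2 : ∀ y ∈ A,
      (pd 2 μ y + Complex.I * pd 3 μ y) / 2
        - Complex.I * μ y * ((pd 1 μ y - pd 0 μ y) / 2) = 0) :
    ∀ y ∈ A,
      (-(pd 0 (pd 0 μ) y) + pd 1 (pd 1 μ) y + pd 2 (pd 2 μ) y + pd 3 (pd 3 μ) y = 0) ∧
      (-((pd 0 μ y) ^ 2) + (pd 1 μ y) ^ 2 + (pd 2 μ y) ^ 2 + (pd 3 μ y) ^ 2 = 0) := by
  intro y hy
  have D := fun j => pd_hasFDerivAt hA hμ hy j
  have S := fun i j => pd_pd_comm hA hμ hy i j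
  have hm : DifferentiableAt ℝ μ y :=
    (hμ.contDiffAt (hA.mem_nhds hy)).differentiableAt (by norm_num)
  have e1 := pd_equation hA hy 1 Complex.I (-Complex.I) hm (D 0) (D 1) (D 2) (D 3)
    (fun z hz => by linear_combination 2 * heq1 z hz)
  have e2 := pd_equation hA hy Complex.I (-Complex.I) (-1) hm (D 2) (D 3) (D 1) (D 0)
    (fun z hz => by linear_combination 2 * heq2 z hz)
  have hI := Complex.I_sq
  constructor
  · have a0 := e1 0
    have a1 := e1 1
    have b2 := e2 2
    have b3 := e2 3
    rw [S 1 0, S 1 2, S 1 3, S 0 2, S 0 3] at *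
    rw [S 3 2] at b3
    linear_combination a1 - a0 + b2 - Complex.I * b3 + (pd 3 (pd 3 μ) y) * hI
  · have q1 := heq1 y hy
    have q2 := heq2 y hy
    linear_combination 2 * (pd 1 μ y - pd 0 μ y) * q1
      + 2 * (pd 2 μ y - Complex.I * pd 3 μ y) * q2 + (pd 3 μ y) ^ 2 * hI

end
end

section
/- Let A³ be an open subset of ℝ³ and let f : A³ → ℂ be real-analytic with ∑ᵢ₌₁³ (∂f/∂xᵢ)² = 0 on A³ and with surjective differential df_x : ℝ³ → ℂ at every x ∈ A³. Then there exist an open set A⁴ ⊆ ℝ⁴ (coordinates (x₀,x₁,x₂,x₃)) with A⁴ ∩ {x₀ = 0} = {0} × A³, and a real-analytic map φ : A⁴ → ℂ with surjective differential at every point, such that φ(0,x) = f(x) for all x ∈ A³ and, on A⁴: x₀·(∑ᵢ₌₀³ ∂²φ/∂xᵢ²) − 2·∂φ/∂x₀ = 0 and ∑ᵢ₌₀³ (∂φ/∂xᵢ)² = 0. -/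
noncomputable section

/-- Partial derivative in the `i`-th coordinate direction of a map `ℝ³ → ℂ`;
coordinates on `ℝ³` are `(x₁, x₂, x₃)`. -/
def pd3 (i : Fin 3) (f : (Fin 3 → ℝ) → ℂ) (x : Fin 3 → ℝ) : ℂ :=
  fderiv ℝ f x (Pi.single i 1)

/-- Inclusion of `ℝ³` as the slice `{x₀ = 0}` of `ℝ⁴`. -/
def slice0 (x : Fin 3 → ℝ) : Fin 4 → ℝ := Fin.cons 0 x

open Filter Topology


lemma frame (ν w : Fin 3 → ℂ) (hw : ∑ j, w j ^ 2 = 1) (hν : ∑ j, ν j ^ 2 = 0)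
    (hνw : ∑ j, w j * ν j = 0) (h0 : ∃ j, ν j ≠ 0) :
    ∃ η : Fin 3 → ℂ, (∑ j, ν j * η j = 1) ∧ (∑ j, w j * η j = 0) ∧
      ∀ j k, w j * w k + ν j * η k + η j * ν k = if j = k then 1 else 0 := by
  obtain ⟨v, hv⟩ : ∃ v : Fin 3 → ℂ, ∑ j, ν j * v j = 1 := by
    obtain ⟨j, hj⟩ := h0
    refine ⟨Pi.single j (ν j)⁻¹, ?_⟩
    simp [Pi.single_apply, hj]
  simp only [Fin.sum_univ_three] at *
  obtain ⟨u, hu1, hu2⟩ : ∃ u : Fin 3 → ℂ, ν 0 * u 0 + ν 1 * u 1 + ν 2 * u 2 = 1 ∧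
      w 0 * u 0 + w 1 * u 1 + w 2 * u 2 = 0 := by
    refine ⟨fun j => v j - (w 0 * v 0 + w 1 * v 1 + w 2 * v 2) * w j, ?_, ?_⟩
    · simp only; linear_combination hv - (w 0 * v 0 + w 1 * v 1 + w 2 * v 2) * hνw
    · simp only; linear_combination - (w 0 * v 0 + w 1 * v 1 + w 2 * v 2) * hw
  obtain ⟨η, h1, h2, h3⟩ : ∃ u : Fin 3 → ℂ, ν 0 * u 0 + ν 1 * u 1 + ν 2 * u 2 = 1 ∧
      w 0 * u 0 + w 1 * u 1 + w 2 * u 2 = 0 ∧ u 0 ^ 2 + u 1 ^ 2 + u 2 ^ 2 = 0 := by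
    set c := (u 0 ^ 2 + u 1 ^ 2 + u 2 ^ 2) / 2 with hc
    have hc' : u 0 ^ 2 + u 1 ^ 2 + u 2 ^ 2 = 2 * c := by rw [hc]; ring
    refine ⟨fun j => u j - c * ν j, ?_, ?_, ?_⟩
    · simp only; linear_combination hu1 - c * hν
    · simp only; linear_combination hu2 - c * hνw
    · simp only; linear_combination hc' - 2 * c * hu1 + c ^ 2 * hν
  refine ⟨η, h1, h2, ?_⟩
  let A : Matrix (Fin 3) (Fin 3) ℂ := Matrix.of fun j => ![w j, ν j, η j]
  let B : Matrix (Fin 3) (Fin 3) ℂ := Matrix.of ![w, η, ν]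
  have hBA : B * A = 1 := by
    ext j k
    fin_cases j <;> fin_cases k <;>
      simp only [Matrix.mul_apply, Fin.sum_univ_three] <;> simp [A, B]
    · linear_combination hw
    · linear_combination hνw
    · linear_combination h2
    · linear_combination h2
    · linear_combination h1
    · linear_combination h3
    · linear_combination hνw
    · linear_combination hν
    · linear_combination h1
  have hAB : A * B = 1 := mul_eq_one_comm.1 hBA
  intro j k
  have := congrFun (congrFun hAB j) k
  simp only [Matrix.mul_apply, Fin.sum_univ_three] at this
  simp [A, B, Matrix.one_apply] at this
  exact this

lemma pde_algebra (z w : Fin 3 → ℂ) (h m : Fin 3 → Fin 3 → ℂ) (x0 α s : ℂ)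
    (hs : s = ∑ j, w j * z j) (hsym : ∀ j k, h j k = h k j)
    (hw : ∑ j, w j ^ 2 = 1) (hwm : ∀ j, ∑ k, w k * m k j = 0)
    (hz : ∑ j, z j ^ 2 = s ^ 2)
    (hzh : ∀ j, ∑ k, z k * h k j = s * ∑ k, (m k j * z k + w k * h k j))
    (hν : ∃ j, z j - s * w j ≠ 0)
    (h5 : ∀ j, (z j - s * w j) - Complex.I * x0 * ∑ k, (z k - s * w k) * m k j = α * z j) :
    x0 * ((∑ j, h j j) + (-Complex.I * ∑ j, ((-Complex.I * ∑ k, w k * m j k) * z j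
      + w j * (-Complex.I * ∑ k, (m k j * z k + w k * h k j))))) = 2 * (-Complex.I * s) := by
  have hI : Complex.I * Complex.I = -1 := Complex.I_mul_I
  have hνν : ∑ j, (z j - s * w j) ^ 2 = 0 := by
    simp only [Fin.sum_univ_three] at *
    linear_combination hz + s ^ 2 * hw + 2 * s * hs
  have hwν : ∑ j, w j * (z j - s * w j) = 0 := by
    simp only [Fin.sum_univ_three] at *
    linear_combination -s * hw - hs
  obtain ⟨η, e1, e2, e3⟩ := frame (fun j => z j - s * w j) w hw hνν hwν hν
  -- n j
  obtain ⟨n, hn⟩ : ∃ n : Fin 3 → ℂ, ∀ j, n j = ∑ k, m k j * z k := ⟨_, fun _ => rfl⟩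
  have hn' : ∀ j, ∑ k, (z k - s * w k) * m k j = n j := by
    intro j
    have := hwm j
    rw [hn]
    simp only [Fin.sum_univ_three] at *
    linear_combination -s * this
  have h5' : ∀ j, (z j - s * w j) - Complex.I * x0 * n j = α * z j := by
    intro j; rw [← hn']; exact h5 j
  have hνh : ∀ j, ∑ k, (z k - s * w k) * h k j = s * n j := by
    intro j
    have := hzh j
    rw [hn]
    simp only [Fin.sum_univ_three] at *
    linear_combination this
  have htr : ∑ j, h j j = (∑ j, ∑ k, w k * h k j * w j) + 2 * s * ∑ j, n j * η j := by
    have a : ∑ j, h j j = ∑ j, ∑ k, (w j * w k + (z j - s * w j) * η k + η j * (z k - s * w k)) * h k j := by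
      simp only [e3]
      simp
    rw [a]
    have b0 := hνh 0
    have b1 := hνh 1
    have b2 := hνh 2
    have s1 := hsym 0 1
    have s2 := hsym 0 2
    have s3 := hsym 1 2
    simp only [Fin.sum_univ_three] at *
    rw [s1, s2, s3] at *
    linear_combination 2 * η 0 * b0 + 2 * η 1 * b1 + 2 * η 2 * b2
  have hφ : (-Complex.I * ∑ j, ((-Complex.I * ∑ k, w k * m j k) * z j
      + w j * (-Complex.I * ∑ k, (m k j * z k + w k * h k j)))) =
      -2 * (∑ j, w j * n j) - ∑ j, ∑ k, w k * h k j * w j := by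
    simp only [hn, Fin.sum_univ_three]
    linear_combination ((w 0 * m 0 0 + w 1 * m 0 1 + w 2 * m 0 2) * z 0
      + (w 0 * m 1 0 + w 1 * m 1 1 + w 2 * m 1 2) * z 1
      + (w 0 * m 2 0 + w 1 * m 2 1 + w 2 * m 2 2) * z 2
      + w 0 * ((m 0 0 * z 0 + w 0 * h 0 0) + (m 1 0 * z 1 + w 1 * h 1 0) + (m 2 0 * z 2 + w 2 * h 2 0))
      + w 1 * ((m 0 1 * z 0 + w 0 * h 0 1) + (m 1 1 * z 1 + w 1 * h 1 1) + (m 2 1 * z 2 + w 2 * h 2 1))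
      + w 2 * ((m 0 2 * z 0 + w 0 * h 0 2) + (m 1 2 * z 1 + w 1 * h 1 2) + (m 2 2 * z 2 + w 2 * h 2 2))) * hI
  rw [htr, hφ]
  have f1 : Complex.I * x0 * ∑ j, n j * η j = 1 - α := by
    have b0 := h5' 0
    have b1 := h5' 1
    have b2 := h5' 2
    simp only [Fin.sum_univ_three] at *
    linear_combination (1 - α) * e1 - α * s * e2 - η 0 * b0 - η 1 * b1 - η 2 * b2
  have f2 : Complex.I * x0 * ∑ j, w j * n j = - α * s := by
    have b0 := h5' 0
    have b1 := h5' 1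
    have b2 := h5' 2
    simp only [Fin.sum_univ_three] at *
    linear_combination hwν + α * hs - w 0 * b0 - w 1 * b1 - w 2 * b2
  linear_combination -2 * Complex.I * s * f1 + 2 * Complex.I * f2 + (-2 * x0 * (∑ j, w j * n j) + 2 * x0 * s * (∑ j, n j * η j)) * hI

lemma pd_congr {i : Fin 4} {a b : (Fin 4 → ℝ) → ℂ} {Y} (h : a =ᶠ[𝓝 Y] b) : pd i a Y = pd i b Y := by
  unfold pd; rw [h.fderiv_eq]

lemma pd_mul {i : Fin 4} {a b : (Fin 4 → ℝ) → ℂ} {Y} (ha : DifferentiableAt ℝ a Y)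
    (hb : DifferentiableAt ℝ b Y) : pd i (fun X => a X * b X) Y = pd i a Y * b Y + a Y * pd i b Y := by
  unfold pd; rw [fderiv_fun_mul ha hb]; simp; ring

lemma pd_sum {i : Fin 4} {a : Fin 3 → (Fin 4 → ℝ) → ℂ} {Y} (ha : ∀ k, DifferentiableAt ℝ (a k) Y) :
    pd i (fun X => ∑ k, a k X) Y = ∑ k, pd i (a k) Y := by
  unfold pd; rw [fderiv_fun_sum (fun k _ => ha k)]; simp

lemma pd_const {i : Fin 4} {c : ℂ} {Y} : pd i (fun _ => c) Y = 0 := by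
  unfold pd; simp

lemma pd_sq {i : Fin 4} {a : (Fin 4 → ℝ) → ℂ} {Y} (ha : DifferentiableAt ℝ a Y) :
    pd i (fun X => a X ^ 2) Y = 2 * a Y * pd i a Y := by
  simp only [pow_two]; rw [pd_mul ha ha]; ring

lemma analyticAt_pd {i : Fin 4} {a : (Fin 4 → ℝ) → ℂ} {Y} (ha : AnalyticAt ℝ a Y) :
    AnalyticAt ℝ (pd i a) Y := by
  unfold pd
  exact ((ContinuousLinearMap.apply ℝ ℂ (Pi.single i 1 : Fin 4 → ℝ)).analyticAt _).comp ha.fderiv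

lemma pd_comm {i j : Fin 4} {a : (Fin 4 → ℝ) → ℂ} {Y} (ha : AnalyticAt ℝ a Y) :
    pd i (pd j a) Y = pd j (pd i a) Y := by
  have h : ∀ i j, pd i (pd j a) Y = fderiv ℝ (fderiv ℝ a) Y (Pi.single i 1) (Pi.single j 1) := by
    intro i j
    change fderiv ℝ (fun X => fderiv ℝ a X (Pi.single j 1)) Y (Pi.single i 1) = _
    rw [fderiv_clm_apply ha.fderiv.differentiableAt (differentiableAt_const _)]
    simp
  rw [h, h]
  exact (ha.contDiffAt (n := ⊤)).isSymmSndFDerivAt_of_omega _ _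

lemma pde_of_transport (φ : (Fin 4 → ℝ) → ℂ) (W : Fin 3 → (Fin 4 → ℝ) → ℂ) (Y : Fin 4 → ℝ)
    (hφ : AnalyticAt ℝ φ Y) (hW : ∀ k, AnalyticAt ℝ (W k) Y)
    (h1 : ∀ᶠ X in 𝓝 Y, pd 0 φ X = -Complex.I * ∑ j : Fin 3, W j X * pd j.succ φ X)
    (h2 : ∀ k, pd 0 (W k) Y = -Complex.I * ∑ j : Fin 3, W j Y * pd j.succ (W k) Y)
    (h3 : ∀ᶠ X in 𝓝 Y, ∑ j, W j X ^ 2 = 1)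
    (h4 : ∀ᶠ X in 𝓝 Y, ∑ j : Fin 3, pd j.succ φ X ^ 2 = (∑ j : Fin 3, W j X * pd j.succ φ X) ^ 2)
    (s α : ℂ) (hs : s = ∑ j : Fin 3, W j Y * pd j.succ φ Y)
    (hν : ∃ j : Fin 3, pd j.succ φ Y - s * W j Y ≠ 0)
    (h5 : ∀ j : Fin 3, (pd j.succ φ Y - s * W j Y) - Complex.I * (Y 0 : ℂ) *
      ∑ k : Fin 3, (pd k.succ φ Y - s * W k Y) * pd j.succ (W k) Y = α * pd j.succ φ Y) :
    ((Y 0 : ℂ) * (∑ i : Fin 4, pd i (pd i φ) Y) - 2 * pd 0 φ Y = 0) ∧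
    ∑ i : Fin 4, (pd i φ Y) ^ 2 = 0 := by
  have dW : ∀ k, DifferentiableAt ℝ (W k) Y := fun k => (hW k).differentiableAt
  have dφ : ∀ k, DifferentiableAt ℝ (pd k φ) Y := fun k => (analyticAt_pd hφ).differentiableAt
  have dWφ : ∀ k : Fin 3, DifferentiableAt ℝ (fun X => W k X * pd k.succ φ X) Y :=
    fun k => (dW k).mul (dφ _)
  have dS : DifferentiableAt ℝ (fun X => ∑ k : Fin 3, W k X * pd k.succ φ X) Y :=
    DifferentiableAt.fun_sum fun k _ => dWφ k
  have e1 := h1.self_of_nhds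
  have e3 := h3.self_of_nhds
  have e4 := h4.self_of_nhds
  rw [← hs] at e1 e4
  have D1 : ∀ i, pd i (pd 0 φ) Y = -Complex.I * ∑ k : Fin 3,
      (pd i (W k) Y * pd k.succ φ Y + W k Y * pd i (pd k.succ φ) Y) := by
    intro i
    rw [pd_congr h1, pd_mul (differentiableAt_const _) dS, pd_const, pd_sum dWφ]
    simp only [pd_mul (dW _) (dφ _)]
    ring
  have D3 : ∀ i, ∑ k, W k Y * pd i (W k) Y = 0 := by
    intro i
    have : pd i (fun X => ∑ k, W k X ^ 2) Y = 0 := by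
      rw [pd_congr h3, pd_const]
    rw [pd_sum fun k => (dW k).fun_pow 2] at this
    simp only [pd_sq (dW _)] at this
    simp only [Fin.sum_univ_three] at *
    linear_combination this / 2
  have D4 : ∀ i, ∑ k : Fin 3, pd k.succ φ Y * pd i (pd k.succ φ) Y = s * ∑ k : Fin 3,
      (pd i (W k) Y * pd k.succ φ Y + W k Y * pd i (pd k.succ φ) Y) := by
    intro i
    have : pd i (fun X => ∑ j : Fin 3, pd j.succ φ X ^ 2) Y = _ := pd_congr h4
    rw [pd_sum fun k => (dφ _).fun_pow 2, pd_sq dS, pd_sum dWφ, ← hs] at this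
    simp only [pd_sq (dφ _), pd_mul (dW _) (dφ _)] at this
    simp only [Fin.sum_univ_three] at *
    linear_combination this / 2
  have key := pde_algebra (fun j => pd j.succ φ Y) (fun j => W j Y)
    (fun k j => pd j.succ (pd k.succ φ) Y) (fun k j => pd j.succ (W k) Y) (Y 0) α s hs
    (fun j k => pd_comm hφ) e3 (fun j => D3 j.succ) e4 (fun j => D4 j.succ) hν h5
  constructor
  · rw [Fin.sum_univ_succ, D1, e1, ← key]
    simp only [h2]
    have : ∀ k : Fin 3, pd 0 (pd k.succ φ) Y = -Complex.I * ∑ l : Fin 3,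
      (pd k.succ (W l) Y * pd l.succ φ Y + W l Y * pd k.succ (pd l.succ φ) Y) := fun k => by
        rw [pd_comm hφ, D1]
    simp only [this]
    ring
  · rw [Fin.sum_univ_succ, e1, e4]
    linear_combination s ^ 2 * Complex.I_mul_I

lemma surj_of_null (φ : (Fin 4 → ℝ) → ℂ) (Y : Fin 4 → ℝ) (h : ∑ i : Fin 4, (pd i φ Y) ^ 2 = 0)
    (h0 : ∃ i, pd i φ Y ≠ 0) : Function.Surjective (fderiv ℝ φ Y) := by
  intro c0
  obtain ⟨i, hi⟩ := h0
  have hpos : 0 < ∑ i, ‖pd i φ Y‖ ^ 2 :=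
    Finset.sum_pos' (fun _ _ => by positivity) ⟨i, Finset.mem_univ _, by positivity⟩
  set T := ∑ i, ‖pd i φ Y‖ ^ 2 with hT
  set c : ℂ := 2 * c0 / T with hc
  refine ⟨fun k => (c * (starRingEnd ℂ) (pd k φ Y)).re, ?_⟩
  set v : Fin 4 → ℝ := fun k => (c * (starRingEnd ℂ) (pd k φ Y)).re with hv
  have h1 : v = ∑ k, v k • (Pi.single k 1 : Fin 4 → ℝ) := by
    ext j; simp [Finset.sum_apply, Pi.single_apply]
  rw [h1, map_sum]
  have h2 : ∀ k, fderiv ℝ φ Y (v k • (Pi.single k 1 : Fin 4 → ℝ)) =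
      c / 2 * (‖pd k φ Y‖ ^ 2 : ℝ) + (starRingEnd ℂ) c / 2 * pd k φ Y ^ 2 := by
    intro k
    rw [map_smul]
    change v k • pd k φ Y = _
    rw [Complex.real_smul]
    have : (v k : ℂ) = (c * (starRingEnd ℂ) (pd k φ Y) + (starRingEnd ℂ) c * pd k φ Y) / 2 := by
      rw [hv]
      simp only
      rw [Complex.re_eq_add_conj]
      simp
    rw [this]
    have h3 := Complex.mul_conj' (pd k φ Y)
    push_cast
    linear_combination c / 2 * h3
  simp only [h2]
  rw [Finset.sum_add_distrib, ← Finset.mul_sum, ← Finset.mul_sum, h, ← Complex.ofReal_sum, ← hT, hc]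
  have : (T : ℂ) ≠ 0 := by exact_mod_cast hpos.ne'
  field_simp
  simp

/-- real points of complex space -/
def cofr {n : ℕ} (x : Fin n → ℝ) : Fin n → ℂ := fun i => (x i : ℂ)

lemma complexify_series {n : ℕ} (p : FormalMultilinearSeries ℝ (Fin n → ℝ) ℂ) (hp : 0 < p.radius) :
    ∃ q : FormalMultilinearSeries ℂ (Fin n → ℂ) ℂ, 0 < q.radius ∧
      ∀ (k : ℕ) (v : Fin n → ℝ), q k (fun _ => cofr v) = p k (fun _ => v) := by
  classical
  let q : FormalMultilinearSeries ℂ (Fin n → ℂ) ℂ := fun k =>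
    ∑ i : Fin k → Fin n, (p k (fun l => Pi.single (i l) 1)) •
      (ContinuousMultilinearMap.mkPiAlgebra ℂ (Fin k) ℂ).compContinuousLinearMap
        (fun l => ContinuousLinearMap.proj (R := ℂ) (φ := fun _ : Fin n => ℂ) (i l))
  have happ : ∀ k (w : Fin k → Fin n → ℂ), q k w =
      ∑ i : Fin k → Fin n, (p k (fun l => Pi.single (i l) 1)) * ∏ l, w l (i l) := by
    intro k w
    simp [q]
  refine ⟨q, ?_, ?_⟩
  · have hb : ∀ k, ‖q k‖ ≤ (n : ℝ) ^ k * ‖p k‖ := by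
      intro k
      refine ContinuousMultilinearMap.opNorm_le_bound (by positivity) ?_
      intro w
      rw [happ]
      calc ‖∑ i : Fin k → Fin n, (p k (fun l => Pi.single (i l) 1)) * ∏ l, w l (i l)‖
          ≤ ∑ i : Fin k → Fin n, ‖(p k (fun l => Pi.single (i l) 1)) * ∏ l, w l (i l)‖ :=
            norm_sum_le _ _
        _ ≤ ∑ i : Fin k → Fin n, ‖p k‖ * ∏ l, ‖w l‖ := by
            refine Finset.sum_le_sum fun i _ => ?_
            rw [norm_mul]
            refine mul_le_mul ?_ ?_ (norm_nonneg _) (norm_nonneg _)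
            · refine ((p k).le_opNorm _).trans ?_
              have : ∏ l : Fin k, ‖(Pi.single (i l) 1 : Fin n → ℝ)‖ ≤ 1 := by
                refine Finset.prod_le_one (fun _ _ => norm_nonneg _) fun l _ => ?_
                rw [Pi.norm_single]; simp
              exact mul_le_of_le_one_right (norm_nonneg _) this
            · rw [norm_prod]
              exact Finset.prod_le_prod (fun _ _ => norm_nonneg _)
                (fun l _ => norm_le_pi_norm _ _)
        _ = (n : ℝ) ^ k * ‖p k‖ * ∏ l, ‖w l‖ := by
            simp [mul_assoc]
    obtain ⟨r, hr0, hr⟩ := ENNReal.lt_iff_exists_nnreal_btwn.1 hp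
    have hr0' : 0 < r := by exact_mod_cast hr0
    obtain ⟨C, hC, hC'⟩ := p.norm_mul_pow_le_of_lt_radius hr
    have hpos : 0 < r / (n + 1) := by positivity
    refine lt_of_lt_of_le (b := ((r / (n + 1) : NNReal) : ENNReal)) (by exact_mod_cast hpos) ?_
    refine q.le_radius_of_bound C fun k => ?_
    refine le_trans ?_ (hC' k)
    have : ((r / (n + 1) : NNReal) : ℝ) ^ k = (r : ℝ) ^ k / ((n : ℝ) + 1) ^ k := by
      push_cast; rw [div_pow]
    rw [this]
    rw [mul_div_assoc', div_le_iff₀ (by positivity)]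
    have h1 : (n : ℝ) ^ k ≤ ((n : ℝ) + 1) ^ k := by gcongr; linarith
    have h2 := hb k
    have h3 : ‖q k‖ ≤ ((n : ℝ) + 1) ^ k * ‖p k‖ := h2.trans (by gcongr)
    calc ‖q k‖ * (r : ℝ) ^ k ≤ ((n : ℝ) + 1) ^ k * ‖p k‖ * (r : ℝ) ^ k := by gcongr
      _ = _ := by ring
  · intro k v
    rw [happ]
    have hv : v = ∑ i, v i • (Pi.single i 1 : Fin n → ℝ) := by
      ext j; simp [Finset.sum_apply, Pi.single_apply]
    conv_rhs => rw [hv]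
    rw [ContinuousMultilinearMap.map_sum]
    refine Finset.sum_congr rfl fun i _ => ?_
    rw [ContinuousMultilinearMap.map_smul_univ]
    simp [cofr, mul_comm]

lemma cofr_sub {n : ℕ} (x y : Fin n → ℝ) : cofr (x - y) = cofr x - cofr y := by
  ext i; simp [cofr]

lemma continuous_cofr {n : ℕ} : Continuous (cofr (n := n)) := by
  unfold cofr; fun_prop

lemma norm_cofr {n : ℕ} (x : Fin n → ℝ) : ‖cofr x‖ = ‖x‖ := by
  simp [cofr, Pi.norm_def, nnnorm]

lemma complexify {n : ℕ} (g : (Fin n → ℝ) → ℂ) (x : Fin n → ℝ) (hg : AnalyticAt ℝ g x) :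
    ∃ G : (Fin n → ℂ) → ℂ, AnalyticAt ℂ G (cofr x) ∧ ∀ᶠ v in 𝓝 x, G (cofr v) = g v := by
  obtain ⟨p, r, hp⟩ := hg
  obtain ⟨q, hq, hqp⟩ := complexify_series p (hp.r_pos.trans_le hp.r_le)
  have h1 := (q.hasFPowerSeriesOnBall hq)
  have h2 := h1.comp_sub (cofr x)
  rw [zero_add] at h2
  refine ⟨fun z => q.sum (z - cofr x), h2.analyticAt, ?_⟩
  filter_upwards [Metric.eball_mem_nhds x hp.r_pos] with v hv
  have h3 := hp.hasSum_sub hv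
  simp only [FormalMultilinearSeries.sum]
  rw [← h3.tsum_eq]
  congr 1
  ext k
  rw [← hqp, cofr_sub]

lemma identity_real {n : ℕ} (G : (Fin n → ℂ) → ℂ) (x : Fin n → ℝ) (hG : AnalyticAt ℂ G (cofr x))
    (h0 : ∀ᶠ v in 𝓝 x, G (cofr v) = 0) : ∀ᶠ z in 𝓝 (cofr x), G z = 0 := by
  obtain ⟨R, hR, hR'⟩ := Metric.eventually_nhds_iff_ball.1 hG.eventually_analyticAt
  obtain ⟨d, hd, hd'⟩ := Metric.eventually_nhds_iff_ball.1 h0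
  set ε := min R d / 3 with hε
  have hεpos : 0 < ε := by positivity
  have hεR : 3 * ε ≤ R := by rw [hε]; linarith [min_le_left R d]
  have hεd : 3 * ε ≤ d := by rw [hε]; linarith [min_le_right R d]
  filter_upwards [Metric.ball_mem_nhds (cofr x) hεpos] with z hz
  rw [mem_ball_iff_norm] at hz
  set a : Fin n → ℝ := fun i => (z i).re with ha
  set b : Fin n → ℝ := fun i => (z i).im with hb
  have hza : ‖a - x‖ < ε := by
    refine lt_of_le_of_lt ?_ hz
    refine (pi_norm_le_iff_of_nonneg (norm_nonneg _)).2 fun i => ?_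
    refine le_trans ?_ (norm_le_pi_norm (z - cofr x) i)
    have := Complex.abs_re_le_norm (z i - x i)
    simpa [ha, cofr] using this
  have hzb : ‖b‖ < ε := by
    refine lt_of_le_of_lt ?_ hz
    refine (pi_norm_le_iff_of_nonneg (norm_nonneg _)).2 fun i => ?_
    refine le_trans ?_ (norm_le_pi_norm (z - cofr x) i)
    have := Complex.abs_im_le_norm (z i - x i)
    simpa [hb, cofr] using this
  have hmem : ∀ t : ℂ, ‖t‖ < 2 → cofr a + t • cofr b ∈ Metric.ball (cofr x) R := by
    intro t ht
    rw [mem_ball_iff_norm]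
    have : cofr a + t • cofr b - cofr x = cofr (a - x) + t • cofr b := by
      rw [cofr_sub]; abel
    rw [this]
    refine lt_of_le_of_lt (norm_add_le _ _) ?_
    rw [norm_smul, norm_cofr, norm_cofr]
    nlinarith [norm_nonneg b, norm_nonneg t]
  have han : AnalyticOnNhd ℂ (fun t : ℂ => G (cofr a + t • cofr b)) (Metric.ball 0 2) := by
    intro t ht
    have ht' : ‖t‖ < 2 := by simpa using ht
    have h1 : AnalyticAt ℂ (fun t : ℂ => cofr a + t • cofr b) t := by fun_prop
    exact AnalyticAt.comp_of_eq (hR' _ (hmem t ht')) h1 rfl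
  have hreal : ∀ t : ℝ, ‖t‖ < 2 → G (cofr a + (t : ℂ) • cofr b) = 0 := by
    intro t ht
    have : cofr a + (t : ℂ) • cofr b = cofr (a + t • b) := by
      ext i; simp [cofr]
    rw [this]
    apply hd'
    rw [mem_ball_iff_norm]
    have : a + t • b - x = (a - x) + t • b := by abel
    rw [this]
    refine lt_of_le_of_lt (norm_add_le _ _) ?_
    rw [norm_smul]
    nlinarith [norm_nonneg b, norm_nonneg t]
  have hfreq : ∃ᶠ t in 𝓝[≠] (0 : ℂ), G (cofr a + t • cofr b) = 0 := by
    have ht : Tendsto (fun t : ℝ => (t : ℂ)) (𝓝[≠] 0) (𝓝[≠] 0) := by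
      refine tendsto_nhdsWithin_iff.2 ⟨?_, ?_⟩
      · have : Tendsto (fun t : ℝ => (t : ℂ)) (𝓝 0) (𝓝 ((0 : ℝ) : ℂ)) :=
          Complex.continuous_ofReal.continuousAt
        exact (by simpa using this : Tendsto (fun t : ℝ => (t : ℂ)) (𝓝 0) (𝓝 0)).mono_left nhdsWithin_le_nhds
      · filter_upwards [self_mem_nhdsWithin] with t ht
        simpa using ht
    refine ht.frequently ?_
    refine Eventually.frequently ?_
    have : ∀ᶠ t : ℝ in 𝓝 0, ‖t‖ < 2 := by
      have := Metric.ball_mem_nhds (0:ℝ) (show (0:ℝ) < 2 by norm_num)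
      filter_upwards [this] with t ht
      simpa using ht
    filter_upwards [nhdsWithin_le_nhds this] with t ht using hreal t ht
  have := han.eqOn_zero_of_preconnected_of_frequently_eq_zero
    (convex_ball _ _).isPreconnected (by simp) hfreq (show Complex.I ∈ Metric.ball (0:ℂ) 2 by simp)
  have hz' : z = cofr a + Complex.I • cofr b := by
    ext i
    simp [cofr, ha, hb, mul_comm Complex.I, Complex.re_add_im]
  rw [hz']; exact this

lemma fderiv_restrict {n : ℕ} (G : (Fin n → ℂ) → ℂ) (g : (Fin n → ℝ) → ℂ) (x : Fin n → ℝ)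
    (hG : DifferentiableAt ℂ G (cofr x)) (h : ∀ᶠ v in 𝓝 x, G (cofr v) = g v) (j : Fin n) :
    fderiv ℂ G (cofr x) (Pi.single j 1) = fderiv ℝ g x (Pi.single j 1) := by
  let L : (Fin n → ℝ) →L[ℝ] (Fin n → ℂ) :=
    ContinuousLinearMap.pi fun i => Complex.ofRealCLM.comp (ContinuousLinearMap.proj i)
  have hL : ∀ v, L v = cofr v := fun v => by ext i; simp [L, cofr]
  have h1 : HasFDerivAt g (((fderiv ℂ G (cofr x)).restrictScalars ℝ).comp L) x := by
    have h2 : HasFDerivAt (fun v => G (cofr v)) (((fderiv ℂ G (cofr x)).restrictScalars ℝ).comp L) x := by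
      have h3 : HasFDerivAt (cofr (n := n)) L x := by
        have := L.hasFDerivAt (x := x)
        exact this.congr_of_eventuallyEq (Eventually.of_forall fun v => (hL v).symm)
      exact (hG.hasFDerivAt.restrictScalars ℝ).comp x h3
    exact h2.congr_of_eventuallyEq (h.mono fun v hv => hv.symm)
  rw [h1.fderiv]
  simp only [ContinuousLinearMap.comp_apply, ContinuousLinearMap.coe_restrictScalars', hL]
  congr 1
  ext i
  by_cases hij : i = j
  · subst hij; simp [cofr]
  · simp [cofr, hij]

lemma implicit_solution (U : (Fin 3 → ℂ) → (Fin 3 → ℂ)) (p : Fin 3 → ℝ)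
    (hU : AnalyticAt ℂ U (cofr p)) :
    ∃ y : (Fin 4 → ℝ) → (Fin 3 → ℂ), AnalyticAt ℝ y (slice0 p) ∧ y (slice0 p) = cofr p ∧
      ∀ᶠ Y in 𝓝 (slice0 p), ∀ k : Fin 3,
        y Y k + Complex.I * (Y 0 : ℂ) * U (y Y) k = (Y k.succ : ℂ) := by
  let Ψ : ℝ × (Fin 3 → ℂ) → ℝ × (Fin 3 → ℂ) := fun q => (q.1, q.2 + (Complex.I * (q.1 : ℂ)) • U q.2)
  have hUR : AnalyticAt ℝ U (cofr p) := hU.restrictScalars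
  have hof : ∀ t, AnalyticAt ℝ (fun t : ℝ => (t : ℂ)) t := fun t => Complex.ofRealCLM.analyticAt t
  have hU2 : AnalyticAt ℝ (fun q : ℝ × (Fin 3 → ℂ) => U q.2) (0, cofr p) :=
    AnalyticAt.comp_of_eq hUR analyticAt_snd rfl
  have hc : AnalyticAt ℝ (fun q : ℝ × (Fin 3 → ℂ) => Complex.I * (q.1 : ℂ)) (0, cofr p) :=
    analyticAt_const.mul (AnalyticAt.comp_of_eq (hof 0) analyticAt_fst rfl)
  have hΨ : AnalyticAt ℝ Ψ (0, cofr p) :=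
    AnalyticAt.prod analyticAt_fst (analyticAt_snd.add (hc.smul hU2))
  let u : (Fin 3 → ℂ) := Complex.I • U (cofr p)
  let L : (ℝ × (Fin 3 → ℂ)) →L[ℝ] (Fin 3 → ℂ) := (ContinuousLinearMap.fst ℝ ℝ (Fin 3 → ℂ)).smulRight u
  let A : (ℝ × (Fin 3 → ℂ)) ≃L[ℝ] (ℝ × (Fin 3 → ℂ)) := ContinuousLinearEquiv.equivOfInverse
    ((ContinuousLinearMap.fst ℝ ℝ (Fin 3 → ℂ)).prod (ContinuousLinearMap.snd ℝ ℝ (Fin 3 → ℂ) + L))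
    ((ContinuousLinearMap.fst ℝ ℝ (Fin 3 → ℂ)).prod (ContinuousLinearMap.snd ℝ ℝ (Fin 3 → ℂ) - L))
    (fun q => by ext <;> simp [L]) (fun q => by ext <;> simp [L])
  have hA : HasFDerivAt Ψ (A : (ℝ × (Fin 3 → ℂ)) →L[ℝ] (ℝ × (Fin 3 → ℂ))) (0, cofr p) := by
    have h1 : HasFDerivAt (fun q : ℝ × (Fin 3 → ℂ) => Complex.I * (q.1 : ℂ))
        (Complex.I • (Complex.ofRealCLM.comp (ContinuousLinearMap.fst ℝ ℝ (Fin 3 → ℂ)))) (0, cofr p) := by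
      have := (Complex.ofRealCLM.comp (ContinuousLinearMap.fst ℝ ℝ (Fin 3 → ℂ))).hasFDerivAt (x := ((0 : ℝ), (cofr p : (Fin 3 → ℂ))))
      exact this.const_mul Complex.I
    have h2 := h1.smul (hU2.differentiableAt.hasFDerivAt)
    have h3 := (hasFDerivAt_fst (𝕜 := ℝ) (p := ((0 : ℝ), (cofr p : (Fin 3 → ℂ))))).prodMk
      ((hasFDerivAt_snd (𝕜 := ℝ) (p := ((0 : ℝ), (cofr p : (Fin 3 → ℂ))))).add h2)
    refine h3.congr_fderiv ?_
    ext q <;> simp [A, L, u]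
  have hcd : ContDiffAt ℝ (⊤ : WithTop ℕ∞) Ψ (0, cofr p) := hΨ.contDiffAt
  have hne : (⊤ : WithTop ℕ∞) ≠ 0 := by simp
  have hΨ0 : Ψ (0, cofr p) = (0, cofr p) := by simp [Ψ]
  have hinv := hcd.to_localInverse hA hne
  have himg := hcd.localInverse_apply_image hA hne
  have hright := (hcd.hasStrictFDerivAt' hA hne).eventually_right_inverse
  change ∀ᶠ q in 𝓝 (Ψ (0, cofr p)), Ψ (hcd.localInverse hA hne q) = q at hright
  generalize hcd.localInverse hA hne = g at hinv himg hright
  rw [hΨ0] at hinv himg hright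
  have hg : AnalyticAt ℝ g (0, cofr p) := hinv.analyticAt
  let T : (Fin 4 → ℝ) →L[ℝ] (ℝ × (Fin 3 → ℂ)) := (ContinuousLinearMap.proj 0).prod
    (ContinuousLinearMap.pi fun k : Fin 3 => Complex.ofRealCLM.comp (ContinuousLinearMap.proj k.succ))
  have hT : T (slice0 p) = (0, cofr p) := by
    ext k <;> simp [T, slice0, cofr]
  have hTc : Tendsto T (𝓝 (slice0 p)) (𝓝 (0, cofr p)) := by
    rw [← hT]; exact T.continuous.continuousAt
  refine ⟨fun Y => (g (T Y)).2, ?_, ?_, ?_⟩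
  · have : AnalyticAt ℝ (fun Y => g (T Y)) (slice0 p) :=
      AnalyticAt.comp_of_eq hg (T.analyticAt _) hT
    exact AnalyticAt.comp_of_eq analyticAt_snd this rfl
  · simp only [hT, himg]
  · filter_upwards [hTc.eventually hright] with Y hY k
    have e1 : (g (T Y)).1 = Y 0 := by
      have := congrArg Prod.fst hY
      simpa [Ψ, T] using this
    have e2 := congrFun (congrArg Prod.snd hY) k
    have e3 : (Ψ (g (T Y))).2 k = (g (T Y)).2 k + Complex.I * ((g (T Y)).1 : ℂ) * U (g (T Y)).2 k := by
      simp [Ψ]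
    rw [e3, e1] at e2
    simpa [T] using e2

/-- complex gradient -/
def cgrad (F : (Fin 3 → ℂ) → ℂ) (z : Fin 3 → ℂ) (k : Fin 3) : ℂ := fderiv ℂ F z (Pi.single k 1)

lemma clm_expand (L : (Fin 3 → ℂ) →L[ℂ] ℂ) (v : Fin 3 → ℂ) :
    L v = ∑ k, L (Pi.single k 1) * v k := by
  have h1 : v = ∑ k, v k • (Pi.single k 1 : Fin 3 → ℂ) := by
    ext j; simp [Finset.sum_apply, Pi.single_apply]
  conv_lhs => rw [h1]
  rw [map_sum]
  simp [mul_comm]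

lemma analyticAt_cgrad {F : (Fin 3 → ℂ) → ℂ} {z : Fin 3 → ℂ} (hF : AnalyticAt ℂ F z) (k : Fin 3) :
    AnalyticAt ℂ (fun z => cgrad F z k) z :=
  ((ContinuousLinearMap.apply ℂ ℂ (Pi.single k 1 : Fin 3 → ℂ)).analyticAt _).comp hF.fderiv

lemma structure_eq (F : (Fin 3 → ℂ) → ℂ) (U : (Fin 3 → ℂ) → (Fin 3 → ℂ)) (z : Fin 3 → ℂ)
    (hF : AnalyticAt ℂ F z) (hU : AnalyticAt ℂ U z)
    (h1 : ∀ᶠ q in 𝓝 z, ∑ k, cgrad F q k ^ 2 = 0) (h2 : ∀ᶠ q in 𝓝 z, ∑ k, U q k ^ 2 = 1)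
    (h3 : ∀ᶠ q in 𝓝 z, ∑ k, U q k * cgrad F q k = 0) (h0 : ∃ k, cgrad F z k ≠ 0) :
    (∀ v, ∑ k, U z k * fderiv ℂ U z v k = 0) ∧
    ∃ a b : ℂ, ∀ v, ∑ k, cgrad F z k * fderiv ℂ U z v k =
      a * (∑ k, cgrad F z k * v k) + b * ∑ k, U z k * v k := by
  have dU : ∀ k, HasFDerivAt (fun q => U q k)
      ((ContinuousLinearMap.proj k).comp (fderiv ℂ U z)) z := fun k =>
    (ContinuousLinearMap.proj (R := ℂ) (φ := fun _ : Fin 3 => ℂ) k).hasFDerivAt.comp z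
      hU.differentiableAt.hasFDerivAt
  have dξ : ∀ k, HasFDerivAt (fun q => cgrad F q k) (fderiv ℂ (fun q => cgrad F q k) z) z :=
    fun k => (analyticAt_cgrad hF k).differentiableAt.hasFDerivAt
  set H : Fin 3 → Fin 3 → ℂ := fun l k => fderiv ℂ (fun q => cgrad F q k) z (Pi.single l 1) with hH
  have Hsym : ∀ l k, H l k = H k l := by
    have h : ∀ i j, H i j = fderiv ℂ (fderiv ℂ F) z (Pi.single i 1) (Pi.single j 1) := by
      intro i j
      change fderiv ℂ (fun X => fderiv ℂ F X (Pi.single j 1)) z (Pi.single i 1) = _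
      rw [fderiv_clm_apply hF.fderiv.differentiableAt (differentiableAt_const _)]
      simp
    intro l k
    rw [h, h]
    exact (hF.contDiffAt (n := ⊤)).isSymmSndFDerivAt_of_omega _ _
  have E1 : ∀ v, ∑ k, cgrad F z k * fderiv ℂ (fun q => cgrad F q k) z v = 0 := by
    intro v
    have a1 := HasFDerivAt.fun_sum (u := Finset.univ) (fun k _ => (dξ k).mul (dξ k))
    have a2 : HasFDerivAt (fun q => ∑ k, cgrad F q k * cgrad F q k) (0 : (Fin 3 → ℂ) →L[ℂ] ℂ) z := by
      refine (hasFDerivAt_const (0 : ℂ) z).congr_of_eventuallyEq ?_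
      filter_upwards [h1] with q hq
      rw [← hq]; simp [pow_two]
    have a3 := congrArg (fun L => L v) (a1.unique a2)
    simp [Fin.sum_univ_three] at a3 ⊢
    linear_combination a3 / 2
  have E2 : ∀ v, ∑ k, U z k * fderiv ℂ U z v k = 0 := by
    intro v
    have a1 := HasFDerivAt.fun_sum (u := Finset.univ) (fun k _ => (dU k).mul (dU k))
    have a2 : HasFDerivAt (fun q => ∑ k, U q k * U q k) (0 : (Fin 3 → ℂ) →L[ℂ] ℂ) z := by
      refine (hasFDerivAt_const (1 : ℂ) z).congr_of_eventuallyEq ?_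
      filter_upwards [h2] with q hq
      rw [← hq]; simp [pow_two]
    have a3 := congrArg (fun L => L v) (a1.unique a2)
    simp [Fin.sum_univ_three] at a3 ⊢
    linear_combination a3 / 2
  have E3 : ∀ v, ∑ k, (U z k * fderiv ℂ (fun q => cgrad F q k) z v + cgrad F z k * fderiv ℂ U z v k) = 0 := by
    intro v
    have a1 := HasFDerivAt.fun_sum (u := Finset.univ) (fun k _ => (dU k).mul (dξ k))
    have a2 : HasFDerivAt (fun q => ∑ k, U q k * cgrad F q k) (0 : (Fin 3 → ℂ) →L[ℂ] ℂ) z := by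
      refine (hasFDerivAt_const (0 : ℂ) z).congr_of_eventuallyEq ?_
      filter_upwards [h3] with q hq
      rw [← hq]
    have a3 := congrArg (fun L => L v) (a1.unique a2)
    simp [Fin.sum_univ_three] at a3 ⊢
    linear_combination a3
  refine ⟨E2, ?_⟩
  have e1 := h1.self_of_nhds
  have e2 := h2.self_of_nhds
  have e3 := h3.self_of_nhds
  obtain ⟨η, f1, f2, f3⟩ := frame (cgrad F z) (U z) e2 e1 e3 h0
  set Q : Fin 3 → ℂ := fun l => ∑ k, U z k * H l k with hQ
  have hQξ : ∑ l, cgrad F z l * Q l = 0 := by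
    have b : ∀ k, ∑ l, cgrad F z l * H k l = 0 := fun k => E1 _
    have b0 := b 0
    have b1 := b 1
    have b2 := b 2
    have s1 := Hsym 0 1
    have s2 := Hsym 0 2
    have s3 := Hsym 1 2
    simp only [hQ, Fin.sum_univ_three] at *
    rw [s1, s2, s3] at *
    linear_combination U z 0 * b0 + U z 1 * b1 + U z 2 * b2
  have hQdec : ∀ j, Q j = (∑ k, η k * Q k) * cgrad F z j + (∑ k, U z k * Q k) * U z j := by
    intro j
    have : Q j = ∑ k, (if j = k then 1 else 0) * Q k := by simp
    rw [this]
    simp only [← f3]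
    simp only [Fin.sum_univ_three] at *
    linear_combination η j * hQξ
  refine ⟨-(∑ k, η k * Q k), -(∑ k, U z k * Q k), fun v => ?_⟩
  have c1 : ∑ k, U z k * fderiv ℂ (fun q => cgrad F q k) z v = ∑ l, Q l * v l := by
    have : ∀ k, fderiv ℂ (fun q => cgrad F q k) z v = ∑ l, H l k * v l := fun k => clm_expand _ v
    simp only [this, hQ, Fin.sum_univ_three]
    ring
  have c2 := E3 v
  rw [Finset.sum_add_distrib, c1] at c2
  have d0 := hQdec 0
  have d1 := hQdec 1
  have d2 := hQdec 2
  generalize (∑ k, η k * Q k) = a at *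
  generalize (∑ k, U z k * Q k) = b at *
  simp only [Fin.sum_univ_three] at *
  linear_combination c2 - v 0 * d0 - v 1 * d1 - v 2 * d2

lemma first_order_algebra (ξ w : Fin 3 → ℂ) (d m : Fin 4 → Fin 3 → ℂ) (a b x0 : ℂ)
    (hξ : ∑ k, ξ k ^ 2 = 0) (hw : ∑ k, w k ^ 2 = 1) (hwξ : ∑ k, w k * ξ k = 0)
    (hne : ∃ k, ξ k ≠ 0)
    (H0 : ∀ k, d 0 k = -Complex.I * w k - Complex.I * x0 * m 0 k)
    (H1 : ∀ j k : Fin 3, d j.succ k = (if j = k then 1 else 0) - Complex.I * x0 * m j.succ k)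
    (Hab : ∀ i, ∑ k, ξ k * m i k = a * (∑ k, ξ k * d i k) + b * ∑ k, w k * d i k)
    (Hwm : ∀ i, ∑ k, w k * m i k = 0) (ζ : Fin 4 → ℂ) (hζ : ∀ i, ζ i = ∑ k, ξ k * d i k)
    (s : ℂ) (hs : s = ∑ j : Fin 3, w j * ζ j.succ) :
    ζ 0 = -Complex.I * s ∧ (∑ j : Fin 3, ζ j.succ ^ 2 = s ^ 2) ∧
    (∃ j : Fin 3, ζ j.succ - s * w j ≠ 0) ∧
    ∃ α, ∀ j : Fin 3, (ζ j.succ - s * w j) - Complex.I * x0 *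
      ∑ k : Fin 3, (ζ k.succ - s * w k) * m j.succ k = α * ζ j.succ := by
  have hI : Complex.I * Complex.I = -1 := Complex.I_mul_I
  have hwd : ∀ j : Fin 3, ∑ k, w k * d j.succ k = w j := by
    intro j
    simp only [H1, mul_sub, Finset.sum_sub_distrib]
    have : ∑ k, w k * (Complex.I * x0 * m j.succ k) = Complex.I * x0 * ∑ k, w k * m j.succ k := by
      rw [Finset.mul_sum]; exact Finset.sum_congr rfl fun _ _ => by ring
    rw [this, Hwm]
    simp
  have hwd0 : ∑ k, w k * d 0 k = -Complex.I := by
    have := Hwm 0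
    simp only [H0]
    simp only [Fin.sum_univ_three] at *
    linear_combination -Complex.I * hw - Complex.I * x0 * this
  have hζj' : ∀ j : Fin 3, ζ j.succ = ξ j - Complex.I * x0 * ∑ k, ξ k * m j.succ k := by
    intro j
    rw [hζ]
    simp only [H1, mul_sub, Finset.sum_sub_distrib]
    rw [Finset.mul_sum]
    congr 1
    · simp
    · exact Finset.sum_congr rfl fun _ _ => by ring
  obtain ⟨c, hc⟩ : ∃ c, c = 1 + Complex.I * x0 * a := ⟨_, rfl⟩
  have hζj : ∀ j : Fin 3, c * ζ j.succ = ξ j - Complex.I * x0 * b * w j := by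
    intro j
    have h1 := hζj' j
    rw [Hab, ← hζ, hwd] at h1
    linear_combination h1 + ζ j.succ * hc
  have hζ0 : c * ζ 0 = - x0 * b := by
    have h1 := hζ 0
    have h2 := Hab 0
    rw [← hζ, hwd0] at h2
    simp only [H0] at h1
    simp only [Fin.sum_univ_three] at *
    linear_combination h1 - Complex.I * hwξ - Complex.I * x0 * h2 + x0 * b * hI + ζ 0 * hc
  have hcs : c * s = - Complex.I * x0 * b := by
    have h0 := hζj 0
    have h1 := hζj 1
    have h2 := hζj 2
    simp only [Fin.sum_univ_three] at *
    linear_combination c * hs + w 0 * h0 + w 1 * h1 + w 2 * h2 + hwξ - Complex.I * x0 * b * hw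
  have hcν : ∀ j : Fin 3, c * (ζ j.succ - s * w j) = ξ j := by
    intro j
    linear_combination hζj j - w j * hcs
  obtain ⟨k0, hk0⟩ := hne
  have hc0 : c ≠ 0 := by
    intro h
    have := hcν k0
    rw [h] at this
    simp at this
    exact hk0 this.symm
  refine ⟨?_, ?_, ⟨k0, fun h => hk0 ?_⟩, ⟨c⁻¹, fun j => ?_⟩⟩
  · apply mul_left_cancel₀ hc0
    linear_combination hζ0 + Complex.I * hcs - x0 * b * hI
  · have h0 := hcν 0
    have h1 := hcν 1
    have h2 := hcν 2
    apply mul_left_cancel₀ (pow_ne_zero 2 hc0)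
    simp only [Fin.sum_univ_three] at *
    have g0 : c * ζ (Fin.succ 0) = ξ 0 + c * s * w 0 := by linear_combination h0
    have g1 : c * ζ (Fin.succ 1) = ξ 1 + c * s * w 1 := by linear_combination h1
    have g2 : c * ζ (Fin.succ 2) = ξ 2 + c * s * w 2 := by linear_combination h2
    have : c ^ 2 * (ζ (Fin.succ 0) ^ 2 + ζ (Fin.succ 1) ^ 2 + ζ (Fin.succ 2) ^ 2) =
      (c * ζ (Fin.succ 0)) ^ 2 + (c * ζ (Fin.succ 1)) ^ 2 + (c * ζ (Fin.succ 2)) ^ 2 := by ring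
    rw [this, g0, g1, g2]
    linear_combination hξ + c ^ 2 * s ^ 2 * hw + 2 * c * s * hwξ
  · rw [← hcν, h, mul_zero]
  · apply mul_left_cancel₀ hc0
    rw [mul_inv_cancel_left₀ hc0]
    have h0 := hcν 0
    have h1 := hcν 1
    have h2 := hcν 2
    have h := hcν j
    have h' := hζj' j
    simp only [Fin.sum_univ_three] at *
    linear_combination h - h' - Complex.I * x0 * (m j.succ 0 * h0 + m j.succ 1 * h1 + m j.succ 2 * h2)


lemma pd_comp_F (F : (Fin 3 → ℂ) → ℂ) (y : (Fin 4 → ℝ) → (Fin 3 → ℂ)) (Y : Fin 4 → ℝ)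
    (hF : DifferentiableAt ℂ F (y Y)) (hy : DifferentiableAt ℝ y Y) (i : Fin 4) :
    pd i (fun X => F (y X)) Y =
      ∑ k, cgrad F (y Y) k * fderiv ℝ y Y (Pi.single i 1) k := by
  have h := (hF.hasFDerivAt.restrictScalars ℝ).comp Y hy.hasFDerivAt
  have h' : fderiv ℝ (fun X => F (y X)) Y = _ := h.fderiv
  unfold pd
  rw [h']
  exact clm_expand (fderiv ℂ F (y Y)) _

lemma pd_comp_U (U : (Fin 3 → ℂ) → (Fin 3 → ℂ)) (y : (Fin 4 → ℝ) → (Fin 3 → ℂ)) (Y : Fin 4 → ℝ)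
    (hU : DifferentiableAt ℂ U (y Y)) (hy : DifferentiableAt ℝ y Y) (i : Fin 4) (k : Fin 3) :
    pd i (fun X => U (y X) k) Y = fderiv ℂ U (y Y) (fderiv ℝ y Y (Pi.single i 1)) k := by
  have h := (hU.hasFDerivAt.restrictScalars ℝ).comp Y hy.hasFDerivAt
  have h2 := ((ContinuousLinearMap.proj (R := ℝ) (φ := fun _ : Fin 3 => ℂ) k).hasFDerivAt).comp Y h
  have h' : fderiv ℝ (fun X => U (y X) k) Y = _ := h2.fderiv
  unfold pd
  rw [h']
  rfl

lemma implicit_deriv (U : (Fin 3 → ℂ) → (Fin 3 → ℂ)) (y : (Fin 4 → ℝ) → (Fin 3 → ℂ)) (Y : Fin 4 → ℝ)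
    (hU : DifferentiableAt ℂ U (y Y)) (hy : DifferentiableAt ℝ y Y)
    (heq : ∀ᶠ X in 𝓝 Y, ∀ k : Fin 3,
        y X k + Complex.I * (X 0 : ℂ) * U (y X) k = (X k.succ : ℂ)) (i : Fin 4) (k : Fin 3) :
    fderiv ℝ y Y (Pi.single i 1) k + Complex.I * ((if i = 0 then 1 else 0) * U (y Y) k +
      (Y 0 : ℂ) * fderiv ℂ U (y Y) (fderiv ℝ y Y (Pi.single i 1)) k) =
      if i = k.succ then 1 else 0 := by
  have hc : ∀ j : Fin 4, HasFDerivAt (fun X : Fin 4 → ℝ => (X j : ℂ))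
      (Complex.ofRealCLM.comp (ContinuousLinearMap.proj j)) Y := fun j =>
    (Complex.ofRealCLM.comp (ContinuousLinearMap.proj (R := ℝ) (φ := fun _ : Fin 4 => ℝ) j)).hasFDerivAt
  have h0 := (hU.hasFDerivAt.restrictScalars ℝ).comp Y hy.hasFDerivAt
  have h2 := ((ContinuousLinearMap.proj (R := ℝ) (φ := fun _ : Fin 3 => ℂ) k).hasFDerivAt).comp Y h0
  have h3 := ((ContinuousLinearMap.proj (R := ℝ) (φ := fun _ : Fin 3 => ℂ) k).hasFDerivAt).comp Y hy.hasFDerivAt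
  have h4 := h3.add (((hc 0).mul h2).const_mul Complex.I)
  have h5 := (hc k.succ).congr_of_eventuallyEq (f₁ := fun X => y X k + Complex.I * ((X 0 : ℂ) * U (y X) k))
    (heq.mono fun X hX => by simp only; rw [← hX k]; ring)
  have h6 := congrArg (fun L => L (Pi.single i 1)) (h4.unique h5)
  simp [Pi.single_apply] at h6
  rw [show (if i = k.succ then (1 : ℂ) else 0) = if k.succ = i then 1 else 0 by simp only [eq_comm], 
    show (if i = 0 then (1 : ℂ) else 0) = if 0 = i then 1 else 0 by simp only [eq_comm]]
  have h7 : ((if k.succ = i then 1 else 0 : ℝ) : ℂ) = if k.succ = i then 1 else 0 := by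
    split_ifs <;> simp
  have h8 : ((if 0 = i then 1 else 0 : ℝ) : ℂ) = if 0 = i then 1 else 0 := by
    split_ifs <;> simp
  first
    | linear_combination h6
    | (rw [h7, h8] at h6; linear_combination h6)
    | (rw [h7] at h6; linear_combination h6)

/-- the first-order equations satisfied by `φ = F ∘ y` and `W = U ∘ y` at a point -/
lemma first_order (F : (Fin 3 → ℂ) → ℂ) (U : (Fin 3 → ℂ) → (Fin 3 → ℂ))
    (y : (Fin 4 → ℝ) → (Fin 3 → ℂ)) (Y : Fin 4 → ℝ)
    (hF : AnalyticAt ℂ F (y Y)) (hU : AnalyticAt ℂ U (y Y)) (hy : DifferentiableAt ℝ y Y)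
    (heq : ∀ᶠ X in 𝓝 Y, ∀ k : Fin 3,
        y X k + Complex.I * (X 0 : ℂ) * U (y X) k = (X k.succ : ℂ))
    (h1 : ∀ᶠ q in 𝓝 (y Y), ∑ k, cgrad F q k ^ 2 = 0) (h2 : ∀ᶠ q in 𝓝 (y Y), ∑ k, U q k ^ 2 = 1)
    (h3 : ∀ᶠ q in 𝓝 (y Y), ∑ k, U q k * cgrad F q k = 0) (h0 : ∃ k, cgrad F (y Y) k ≠ 0)
    (hn : |Y 0| * ‖fderiv ℂ U (y Y)‖ < 1) (φ : (Fin 4 → ℝ) → ℂ) (hφ : φ = fun X => F (y X))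
    (W : Fin 3 → (Fin 4 → ℝ) → ℂ) (hW : W = fun k X => U (y X) k)
    (s : ℂ) (hs : s = ∑ j : Fin 3, W j Y * pd j.succ φ Y) :
    (pd 0 φ Y = -Complex.I * s ∧ (∑ j : Fin 3, pd j.succ φ Y ^ 2 = s ^ 2) ∧
    (∃ j : Fin 3, pd j.succ φ Y - s * W j Y ≠ 0) ∧
    ∃ α, ∀ j : Fin 3, (pd j.succ φ Y - s * W j Y) - Complex.I * (Y 0 : ℂ) *
      ∑ k : Fin 3, (pd k.succ φ Y - s * W k Y) * pd j.succ (W k) Y = α * pd j.succ φ Y) ∧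
    (∀ k, pd 0 (W k) Y = -Complex.I * ∑ j : Fin 3, W j Y * pd j.succ (W k) Y) ∧
    ∑ j, W j Y ^ 2 = 1 := by
  have pφ : ∀ i, pd i φ Y = _ := fun i => hφ ▸ pd_comp_F F y Y hF.differentiableAt hy i
  have pW : ∀ i k, pd i (W k) Y = fderiv ℂ U (y Y) (fderiv ℝ y Y (Pi.single i 1)) k :=
    fun i k => by rw [hW]; exact pd_comp_U U y Y hU.differentiableAt hy i k
  have hWY : ∀ k, W k Y = U (y Y) k := fun k => by rw [hW]
  have hd := implicit_deriv U y Y hU.differentiableAt hy heq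
  have hd0 : ∀ k, fderiv ℝ y Y (Pi.single 0 1) k = -Complex.I * W k Y -
      Complex.I * (Y 0 : ℂ) * pd 0 (W k) Y := by
    intro k
    have := hd 0 k
    rw [if_pos rfl, if_neg (Fin.succ_ne_zero k).symm, ← pW, ← hWY] at this
    linear_combination this
  have hd1 : ∀ j k : Fin 3, fderiv ℝ y Y (Pi.single j.succ 1) k = (if j = k then 1 else 0) -
      Complex.I * (Y 0 : ℂ) * pd j.succ (W k) Y := by
    intro j k
    have := hd j.succ k
    rw [if_neg (Fin.succ_ne_zero j), ← pW] at this
    simp only [Fin.succ_inj] at this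
    linear_combination this
  obtain ⟨hUU, a, b, hab⟩ := structure_eq F U (y Y) hF hU h1 h2 h3 h0
  refine ⟨?_, ?_, ?_⟩
  · refine first_order_algebra (cgrad F (y Y)) (fun k => W k Y)
      (fun i k => fderiv ℝ y Y (Pi.single i 1) k) (fun i k => pd i (W k) Y) a b (Y 0)
      h1.self_of_nhds ?_ ?_ h0 hd0 hd1 ?_ ?_ (fun i => pd i φ Y) pφ s hs
    · simp only [hWY]; exact h2.self_of_nhds
    · simp only [hWY]; exact h3.self_of_nhds
    · intro i
      simp only [pW, hWY]
      exact hab _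
    · intro i
      simp only [pW, hWY]
      exact hUU _
  · set v : Fin 3 → ℂ := fderiv ℝ y Y (Pi.single 0 1) +
      ∑ j : Fin 3, (Complex.I * W j Y) • fderiv ℝ y Y (Pi.single j.succ 1) with hv
    have hUv : ∀ k, fderiv ℂ U (y Y) v k = pd 0 (W k) Y + Complex.I * ∑ j : Fin 3, W j Y * pd j.succ (W k) Y := by
      intro k
      rw [hv, map_add, map_sum]
      simp only [map_smul, Pi.add_apply, Finset.sum_apply, Pi.smul_apply, smul_eq_mul, ← pW]
      rw [Finset.mul_sum]
      congr 1
      exact Finset.sum_congr rfl fun _ _ => by ring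
    have hvk : ∀ k, v k = -(Complex.I * (Y 0 : ℂ)) * fderiv ℂ U (y Y) v k := by
      intro k
      rw [hUv]
      have : v k = fderiv ℝ y Y (Pi.single 0 1) k +
        ∑ j : Fin 3, (Complex.I * W j Y) * fderiv ℝ y Y (Pi.single j.succ 1) k := by
        rw [hv]; simp
      rw [this]
      simp only [hd0, hd1]
      simp only [mul_sub, Finset.sum_sub_distrib]
      simp [Fin.sum_univ_three]
      ring
    have hv0 : v = 0 := by
      by_contra hne
      have hpos : 0 < ‖v‖ := norm_pos_iff.2 hne
      have e1 : v = (-(Complex.I * (Y 0 : ℂ))) • fderiv ℂ U (y Y) v := by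
        ext k; simpa using hvk k
      have e2 : ‖v‖ ≤ |Y 0| * (‖fderiv ℂ U (y Y)‖ * ‖v‖) := by
        conv_lhs => rw [e1]
        rw [norm_smul]
        simp only [norm_neg, norm_mul, Complex.norm_I, one_mul, Complex.norm_real, Real.norm_eq_abs]
        gcongr
        exact ContinuousLinearMap.le_opNorm _ _
      nlinarith
    intro k
    have := hUv k
    rw [hv0] at this
    simp at this
    linear_combination -this
  · simp only [hWY]; exact h2.self_of_nhds

/-- `φ` is, near the boundary point `x`, the extension obtained from complexified data. -/
def GoodAt (f : (Fin 3 → ℝ) → ℂ) (u : (Fin 3 → ℝ) → Fin 3 → ℂ) (φ : (Fin 4 → ℝ) → ℂ)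
    (x : Fin 3 → ℝ) : Prop :=
  ∃ (F : (Fin 3 → ℂ) → ℂ) (U : (Fin 3 → ℂ) → (Fin 3 → ℂ)) (y : (Fin 4 → ℝ) → (Fin 3 → ℂ)),
    AnalyticAt ℂ F (cofr x) ∧ AnalyticAt ℂ U (cofr x) ∧ (∀ᶠ v in 𝓝 x, F (cofr v) = f v) ∧
    (∀ᶠ v in 𝓝 x, U (cofr v) = u v) ∧ ContinuousAt y (slice0 x) ∧
    (∀ᶠ Y in 𝓝 (slice0 x), ∀ k : Fin 3,
        y Y k + Complex.I * (Y 0 : ℂ) * U (y Y) k = (Y k.succ : ℂ)) ∧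
    ∀ᶠ Y in 𝓝 (slice0 x), φ Y = F (y Y)

lemma eq_at_slice {U : (Fin 3 → ℂ) → (Fin 3 → ℂ)} {y : (Fin 4 → ℝ) → (Fin 3 → ℂ)} {x : Fin 3 → ℝ}
    (h : ∀ k : Fin 3, y (slice0 x) k + Complex.I * (slice0 x 0 : ℂ) * U (y (slice0 x)) k =
      (slice0 x k.succ : ℂ)) : y (slice0 x) = cofr x := by
  ext k
  have := h k
  simpa [slice0, cofr] using this

lemma GoodAt.boundary {f u φ x} (h : GoodAt f u φ x) : φ (slice0 x) = f x := by
  obtain ⟨F, U, y, hF, hU, hf, hu, hy, heq, hφ⟩ := h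
  rw [hφ.self_of_nhds, eq_at_slice heq.self_of_nhds, hf.self_of_nhds]

lemma GoodAt.unique {f u φ₁ φ₂ x} (h₁ : GoodAt f u φ₁ x) (h₂ : GoodAt f u φ₂ x) :
    φ₁ =ᶠ[𝓝 (slice0 x)] φ₂ := by
  obtain ⟨F, U, y, hF, hU, hf, hu, hy, heq, hφ⟩ := h₁
  obtain ⟨F', U', y', hF', hU', hf', hu', hy', heq', hφ'⟩ := h₂
  have e : y (slice0 x) = cofr x := eq_at_slice heq.self_of_nhds
  have e' : y' (slice0 x) = cofr x := eq_at_slice heq'.self_of_nhds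
  have hFF : ∀ᶠ z in 𝓝 (cofr x), F z = F' z := by
    have := identity_real (fun z => F z - F' z) x (hF.sub hF')
      (by filter_upwards [hf, hf'] with v h h'; rw [h, h', sub_self])
    filter_upwards [this] with z hz using sub_eq_zero.1 hz
  have hUU : ∀ᶠ z in 𝓝 (cofr x), U z = U' z := by
    have : ∀ k, ∀ᶠ z in 𝓝 (cofr x), U z k = U' z k := by
      intro k
      have hUk : AnalyticAt ℂ (fun z => U z k) (cofr x) := analyticAt_pi_iff.1 hU k
      have hUk' : AnalyticAt ℂ (fun z => U' z k) (cofr x) := analyticAt_pi_iff.1 hU' k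
      have := identity_real (fun z => U z k - U' z k) x (hUk.sub hUk')
        (by filter_upwards [hu, hu'] with v h h'; rw [h, h', sub_self])
      filter_upwards [this] with z hz using sub_eq_zero.1 hz
    filter_upwards [eventually_all.2 this] with z hz
    ext k; exact hz k
  obtain ⟨K, S, hS, hK⟩ := hU.hasStrictFDerivAt.exists_lipschitzOnWith
  have hsm : ∀ᶠ Y in 𝓝 (slice0 x), |Y 0| * (K : ℝ) < 1 := by
    have hc : ContinuousAt (fun Y : Fin 4 → ℝ => |Y 0| * (K : ℝ)) (slice0 x) :=
      ((continuous_apply (0 : Fin 4)).abs.mul continuous_const).continuousAt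
    exact hc.eventually_lt_const (by simp [slice0])
  rw [ContinuousAt, e] at hy
  rw [ContinuousAt, e'] at hy'
  filter_upwards [hφ, hφ', heq, heq', hsm, hy hS, hy' hS, hy'.eventually hFF, hy'.eventually hUU]
    with Y a a' b b' c d d' g g'
  have key : y Y = y' Y := by
    by_contra hne
    have hpos : 0 < ‖y Y - y' Y‖ := norm_pos_iff.2 (sub_ne_zero.2 hne)
    have e1 : y Y - y' Y = (-(Complex.I * (Y 0 : ℂ))) • (U (y Y) - U (y' Y)) := by
      ext k
      have b1 := b k
      have b2 := b' k
      rw [← g'] at b2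
      simp
      linear_combination b1 - b2
    have e2 : ‖y Y - y' Y‖ ≤ |Y 0| * (K * ‖y Y - y' Y‖) := by
      conv_lhs => rw [e1]
      rw [norm_smul]
      simp only [norm_neg, norm_mul, Complex.norm_I, one_mul, Complex.norm_real, Real.norm_eq_abs]
      gcongr
      exact hK.norm_sub_le d d'
    nlinarith
  rw [a, a', key, g]

/-- pointwise conclusion -/
def SolAt (φ : (Fin 4 → ℝ) → ℂ) (Y : Fin 4 → ℝ) : Prop :=
  AnalyticAt ℝ φ Y ∧ Function.Surjective (fderiv ℝ φ Y) ∧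
  ((Y 0 : ℂ) * (∑ i : Fin 4, pd i (pd i φ) Y) - 2 * pd 0 φ Y = 0) ∧
  ∑ i : Fin 4, (pd i φ Y) ^ 2 = 0

lemma local_existence (f : (Fin 3 → ℝ) → ℂ) (u : (Fin 3 → ℝ) → Fin 3 → ℂ) (p : Fin 3 → ℝ)
    (hf : AnalyticAt ℝ f p) (hu : ∀ k, AnalyticAt ℝ (fun x => u x k) p)
    (h1 : ∀ᶠ x in 𝓝 p, ∑ k, pd3 k f x ^ 2 = 0) (h2 : ∀ᶠ x in 𝓝 p, ∑ k, u x k ^ 2 = 1)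
    (h3 : ∀ᶠ x in 𝓝 p, ∑ k, u x k * pd3 k f x = 0) (h0 : ∃ k, pd3 k f p ≠ 0) :
    ∃ φ, ∀ᶠ Y in 𝓝 (slice0 p), SolAt φ Y ∧ ∀ x, Y = slice0 x → GoodAt f u φ x := by
  obtain ⟨F, hF, hFf⟩ := complexify f p hf
  have hUex := fun k => complexify (fun x => u x k) p (hu k)
  choose U0 hU0 hU0u using hUex
  obtain ⟨U, hUdef⟩ : ∃ U : (Fin 3 → ℂ) → (Fin 3 → ℂ), U = fun z k => U0 k z := ⟨_, rfl⟩
  have hU : AnalyticAt ℂ U (cofr p) := by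
    rw [hUdef]; exact analyticAt_pi_iff.2 hU0
  have hUu : ∀ᶠ v in 𝓝 p, U (cofr v) = u v := by
    filter_upwards [eventually_all.2 hU0u] with v hv
    ext k; rw [hUdef]; exact hv k
  have hcofr : Tendsto cofr (𝓝 p) (𝓝 (cofr p)) := continuous_cofr.continuousAt
  have hgrad : ∀ᶠ v in 𝓝 p, ∀ k, cgrad F (cofr v) k = pd3 k f v := by
    filter_upwards [hcofr.eventually hF.eventually_analyticAt, hFf.eventually_nhds] with v hv hv' k
    exact fderiv_restrict F f v hv.differentiableAt hv' k
  have hUk : ∀ k, AnalyticAt ℂ (fun z => U z k) (cofr p) := fun k => analyticAt_pi_iff.1 hU k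
  have i1 : ∀ᶠ z in 𝓝 (cofr p), ∑ k, cgrad F z k ^ 2 = 0 := by
    refine identity_real (fun z => ∑ k, cgrad F z k ^ 2) p ?_ ?_
    · exact Finset.analyticAt_fun_sum _ fun k _ => (analyticAt_cgrad hF k).fun_pow 2
    · filter_upwards [h1, hgrad] with v a b
      simp only [b, a]
  have i2 : ∀ᶠ z in 𝓝 (cofr p), ∑ k, U z k ^ 2 = 1 := by
    have := identity_real (fun z => ∑ k, U z k ^ 2 - 1) p ?_ ?_
    · filter_upwards [this] with z hz using sub_eq_zero.1 hz
    · exact (Finset.analyticAt_fun_sum _ fun k _ => (hUk k).fun_pow 2).sub analyticAt_const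
    · filter_upwards [h2, hUu] with v a b
      simp only [b, a, sub_self]
  have i3 : ∀ᶠ z in 𝓝 (cofr p), ∑ k, U z k * cgrad F z k = 0 := by
    refine identity_real (fun z => ∑ k, U z k * cgrad F z k) p ?_ ?_
    · exact Finset.analyticAt_fun_sum _ fun k _ => (hUk k).fun_mul (analyticAt_cgrad hF k)
    · filter_upwards [h3, hgrad, hUu] with v a b c
      simp only [b, c, a]
  have i0 : ∀ᶠ z in 𝓝 (cofr p), ∃ k, cgrad F z k ≠ 0 := by
    obtain ⟨k, hk⟩ := h0
    rw [← hgrad.self_of_nhds k] at hk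
    filter_upwards [(analyticAt_cgrad hF k).continuousAt.eventually_ne hk] with z hz
    exact ⟨k, hz⟩
  obtain ⟨y, hy, hyp, heq⟩ := implicit_solution U p hU
  have hyt : Tendsto y (𝓝 (slice0 p)) (𝓝 (cofr p)) := by
    rw [← hyp]; exact hy.continuousAt
  have hn : ∀ᶠ Y in 𝓝 (slice0 p), |Y 0| * ‖fderiv ℂ U (y Y)‖ < 1 := by
    have hc : ContinuousAt (fun Y : Fin 4 → ℝ => |Y 0| * ‖fderiv ℂ U (y Y)‖) (slice0 p) := by
      have a : ContinuousAt (fun Y => fderiv ℂ U (y Y)) (slice0 p) :=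
        ContinuousAt.comp_of_eq hU.fderiv.continuousAt hy.continuousAt hyp
      have b : ContinuousAt (fun Y : Fin 4 → ℝ => |Y 0|) (slice0 p) :=
        (continuous_apply (0 : Fin 4)).abs.continuousAt
      exact b.mul a.norm
    exact hc.eventually_lt_const (by simp [slice0])
  have hall : ∀ᶠ Y in 𝓝 (slice0 p), AnalyticAt ℂ F (y Y) ∧ AnalyticAt ℂ U (y Y) ∧
      AnalyticAt ℝ y Y ∧ (∀ᶠ X in 𝓝 Y, ∀ k : Fin 3,
        y X k + Complex.I * (X 0 : ℂ) * U (y X) k = (X k.succ : ℂ)) ∧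
      (∀ᶠ q in 𝓝 (y Y), ∑ k, cgrad F q k ^ 2 = 0) ∧ (∀ᶠ q in 𝓝 (y Y), ∑ k, U q k ^ 2 = 1) ∧
      (∀ᶠ q in 𝓝 (y Y), ∑ k, U q k * cgrad F q k = 0) ∧ (∃ k, cgrad F (y Y) k ≠ 0) ∧
      |Y 0| * ‖fderiv ℂ U (y Y)‖ < 1 := by
    filter_upwards [hyt.eventually hF.eventually_analyticAt, hyt.eventually hU.eventually_analyticAt,
      hy.eventually_analyticAt, heq.eventually_nhds, hyt.eventually i1.eventually_nhds,
      hyt.eventually i2.eventually_nhds, hyt.eventually i3.eventually_nhds, hyt.eventually i0, hn]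
      with Y a1 a2 a3 a4 a5 a6 a7 a8 a9
    exact ⟨a1, a2, a3, a4, a5, a6, a7, a8, a9⟩
  have htail : Tendsto (fun Y : Fin 4 → ℝ => fun k : Fin 3 => Y k.succ) (𝓝 (slice0 p)) (𝓝 p) := by
    have : Continuous (fun Y : Fin 4 → ℝ => fun k : Fin 3 => Y k.succ) := by fun_prop
    have h := this.tendsto (slice0 p)
    simpa [slice0] using h
  obtain ⟨φ, hφ⟩ : ∃ φ : (Fin 4 → ℝ) → ℂ, φ = fun X => F (y X) := ⟨_, rfl⟩
  obtain ⟨W, hW⟩ : ∃ W : Fin 3 → (Fin 4 → ℝ) → ℂ, W = fun k X => U (y X) k := ⟨_, rfl⟩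
  refine ⟨φ, ?_⟩
  have hfo : ∀ᶠ Y in 𝓝 (slice0 p), _ := hall.mono fun Y ⟨a1, a2, a3, a4, a5, a6, a7, a8, a9⟩ =>
    first_order F U y Y a1 a2 a3.differentiableAt a4 a5 a6 a7 a8 a9 φ hφ W hW _ rfl
  filter_upwards [hall, hfo.eventually_nhds, htail.eventually hFf.eventually_nhds,
    htail.eventually hUu.eventually_nhds] with Y hY hYfo hYf hYu
  obtain ⟨a1, a2, a3, a4, a5, a6, a7, a8, a9⟩ := hY
  constructor
  · have hφa : AnalyticAt ℝ φ Y := by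
      rw [hφ]; exact AnalyticAt.comp_of_eq (a1.restrictScalars (𝕜 := ℝ)) a3 rfl
    have hWa : ∀ k, AnalyticAt ℝ (W k) Y := by
      intro k
      have : AnalyticAt ℝ (fun X => U (y X)) Y := AnalyticAt.comp_of_eq (a2.restrictScalars (𝕜 := ℝ)) a3 rfl
      rw [hW]
      exact analyticAt_pi_iff.1 this k
    obtain ⟨⟨b1, b2, b3, α, b4⟩, b5, b6⟩ := hYfo.self_of_nhds
    obtain ⟨c1, c2⟩ := pde_of_transport φ W Y hφa hWa (hYfo.mono fun X hX => hX.1.1) b5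
      (hYfo.mono fun X hX => hX.2.2) (hYfo.mono fun X hX => hX.1.2.1) _ α rfl b3 b4
    refine ⟨hφa, surj_of_null φ Y c2 ?_, c1, c2⟩
    by_contra hcon
    push Not at hcon
    obtain ⟨j, hj⟩ := b3
    apply hj
    simp [hcon]
  · rintro x rfl
    have e : y (slice0 x) = cofr x := eq_at_slice a4.self_of_nhds
    have ex : (fun k : Fin 3 => slice0 x k.succ) = x := by ext k; simp [slice0]
    rw [ex] at hYf hYu
    rw [e] at a1 a2
    exact ⟨F, U, y, a1, a2, hYf, hYu, a3.continuousAt, a4, Eventually.of_forall fun Y => by rw [hφ]⟩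

lemma analyticAt_pd3 {i : Fin 3} {a : (Fin 3 → ℝ) → ℂ} {Y} (ha : AnalyticAt ℝ a Y) :
    AnalyticAt ℝ (pd3 i a) Y := by
  unfold pd3
  exact ((ContinuousLinearMap.apply ℝ ℂ (Pi.single i 1 : Fin 3 → ℝ)).analyticAt _).comp ha.fderiv

lemma unit_tangent (A3 : Set (Fin 3 → ℝ)) 
    (f : (Fin 3 → ℝ) → ℂ) (hf : AnalyticOnNhd ℝ f A3)
    (hconf : ∀ x ∈ A3, ∑ i : Fin 3, (pd3 i f x) ^ 2 = 0)
    (hne : ∀ x ∈ A3, ∃ k, pd3 k f x ≠ 0) :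
    ∃ u : (Fin 3 → ℝ) → Fin 3 → ℂ, (∀ x ∈ A3, ∀ k, AnalyticAt ℝ (fun x => u x k) x) ∧
      (∀ x ∈ A3, ∑ k, u x k ^ 2 = 1) ∧ ∀ x ∈ A3, ∑ k, u x k * pd3 k f x = 0 := by
  let c : Fin 3 → (Fin 3 → ℝ) → ℂ := fun k x => pd3 k f x
  let d : Fin 3 → (Fin 3 → ℝ) → ℂ := fun k x => (starRingEnd ℂ) (pd3 k f x)
  let N : (Fin 3 → ℝ) → ℂ := fun x => c 0 x * d 0 x + c 1 x * d 1 x + c 2 x * d 2 x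
  have hc : ∀ x ∈ A3, ∀ k, AnalyticAt ℝ (c k) x := fun x hx k => analyticAt_pd3 (hf x hx)
  have hd : ∀ x ∈ A3, ∀ k, AnalyticAt ℝ (d k) x := fun x hx k =>
    AnalyticAt.comp_of_eq ((Complex.conjCLE : ℂ →L[ℝ] ℂ).analyticAt _) (hc x hx k) rfl
  have hN : ∀ x ∈ A3, AnalyticAt ℝ N x := fun x hx =>
    (((hc x hx 0).mul (hd x hx 0)).add ((hc x hx 1).mul (hd x hx 1))).add ((hc x hx 2).mul (hd x hx 2))
  have hN0 : ∀ x ∈ A3, N x ≠ 0 := by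
    intro x hx
    obtain ⟨k, hk⟩ := hne x hx
    have hpos : 0 < ∑ i, ‖pd3 i f x‖ ^ 2 :=
      Finset.sum_pos' (fun _ _ => by positivity) ⟨k, Finset.mem_univ _, by positivity⟩
    have : N x = ((∑ i, ‖pd3 i f x‖ ^ 2 : ℝ) : ℂ) := by
      simp only [N, c, d, Complex.mul_conj', Fin.sum_univ_three]
      push_cast; ring
    rw [this]
    exact_mod_cast hpos.ne'
  have hcc : ∀ x ∈ A3, c 0 x ^ 2 + c 1 x ^ 2 + c 2 x ^ 2 = 0 := by
    intro x hx
    have := hconf x hx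
    simpa [Fin.sum_univ_three] using this
  have key : ∀ i j x, x ∈ A3 → AnalyticAt ℝ (fun x => Complex.I * (c i x * d j x - c j x * d i x) / N x) x :=
    fun i j x hx => (analyticAt_const.mul (((hc x hx i).mul (hd x hx j)).sub
      ((hc x hx j).mul (hd x hx i)))).div (hN x hx) (hN0 x hx)
  refine ⟨fun x => ![Complex.I * (c 1 x * d 2 x - c 2 x * d 1 x) / N x,
    Complex.I * (c 2 x * d 0 x - c 0 x * d 2 x) / N x,
    Complex.I * (c 0 x * d 1 x - c 1 x * d 0 x) / N x], ?_, ?_, ?_⟩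
  · intro x hx k
    fin_cases k
    · exact key 1 2 x hx
    · exact key 2 0 x hx
    · exact key 0 1 x hx
  · intro x hx
    have h0 := hN0 x hx
    have h1 := hcc x hx
    have hNx : N x = c 0 x * d 0 x + c 1 x * d 1 x + c 2 x * d 2 x := rfl
    have hI : Complex.I ^ 2 = -1 := Complex.I_sq
    simp only [Fin.sum_univ_three, Matrix.cons_val]
    field_simp
    rw [hI, hNx]
    linear_combination (-(d 0 x ^ 2 + d 1 x ^ 2 + d 2 x ^ 2)) * h1
  · intro x hx
    have h0 := hN0 x hx
    simp only [Fin.sum_univ_three, Matrix.cons_val]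
    change _ * c 0 x + _ * c 1 x + _ * c 2 x = 0
    field_simp
    ring

theorem horizontally_conformal_submersion_bounds_hyperbolic_harmonic_morphism
    (A3 : Set (Fin 3 → ℝ)) (hA3 : IsOpen A3)
    (f : (Fin 3 → ℝ) → ℂ) (hf : AnalyticOnNhd ℝ f A3)
    (hconf : ∀ x ∈ A3, ∑ i : Fin 3, (pd3 i f x) ^ 2 = 0)
    (hsub : ∀ x ∈ A3, Function.Surjective (fderiv ℝ f x)) :
    ∃ A4 : Set (Fin 4 → ℝ), IsOpen A4 ∧
      A4 ∩ {y | y 0 = 0} = slice0 '' A3 ∧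
      ∃ φ : (Fin 4 → ℝ) → ℂ, AnalyticOnNhd ℝ φ A4 ∧
        (∀ y ∈ A4, Function.Surjective (fderiv ℝ φ y)) ∧
        (∀ x ∈ A3, φ (slice0 x) = f x) ∧
        (∀ y ∈ A4, (y 0 : ℂ) * (∑ i : Fin 4, pd i (pd i φ) y) - 2 * pd 0 φ y = 0) ∧
        (∀ y ∈ A4, ∑ i : Fin 4, (pd i φ y) ^ 2 = 0) := by
  classical
  have hne : ∀ x ∈ A3, ∃ k, pd3 k f x ≠ 0 := by
    intro x hx
    by_contra hcon
    push Not at hcon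
    obtain ⟨v, hv⟩ := hsub x hx 1
    have h1 : v = ∑ k, v k • (Pi.single k 1 : Fin 3 → ℝ) := by
      ext j; simp [Finset.sum_apply, Pi.single_apply]
    rw [h1, map_sum] at hv
    have h2 : ∀ k, fderiv ℝ f x (v k • (Pi.single k 1 : Fin 3 → ℝ)) = 0 := by
      intro k
      rw [map_smul]
      have : fderiv ℝ f x (Pi.single k 1 : Fin 3 → ℝ) = 0 := hcon k
      rw [this, smul_zero]
    simp [h2] at hv
  obtain ⟨u, hu, hu2, hu3⟩ := unit_tangent A3 f hf hconf hne
  have htail : ∀ p, Tendsto (fun Y : Fin 4 → ℝ => fun k : Fin 3 => Y k.succ) (𝓝 (slice0 p)) (𝓝 p) := by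
    intro p
    have : Continuous (fun Y : Fin 4 → ℝ => fun k : Fin 3 => Y k.succ) := by fun_prop
    have h := this.tendsto (slice0 p)
    simpa [slice0] using h
  have hloc : ∀ p ∈ A3, ∃ (φ : (Fin 4 → ℝ) → ℂ) (r : ℝ), 0 < r ∧ ∀ Y ∈ Metric.ball (slice0 p) r,
      SolAt φ Y ∧ (∀ x, Y = slice0 x → GoodAt f u φ x) ∧ (fun k : Fin 3 => Y k.succ) ∈ A3 := by
    intro p hp
    have hA : ∀ᶠ x in 𝓝 p, x ∈ A3 := hA3.mem_nhds hp
    obtain ⟨φ, hφ⟩ := local_existence f u p (hf p hp) (hu p hp) (hA.mono hconf) (hA.mono hu2)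
      (hA.mono hu3) (hne p hp)
    obtain ⟨r, hr, hr'⟩ := Metric.eventually_nhds_iff_ball.1 (hφ.and ((htail p).eventually hA))
    exact ⟨φ, r, hr, fun Y hY => ⟨(hr' Y hY).1.1, (hr' Y hY).1.2, (hr' Y hY).2⟩⟩
  choose! Φ r hr hΦ using hloc
  -- compatibility
  have hcompat : ∀ p ∈ A3, ∀ q ∈ A3, ∀ Y ∈ Metric.ball (slice0 p) (r p) ∩ Metric.ball (slice0 q) (r q),
      Φ p Y = Φ q Y := by
    intro p hp q hq Y hY
    set B := Metric.ball (slice0 p) (r p) ∩ Metric.ball (slice0 q) (r q) with hB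
    set x : Fin 3 → ℝ := fun k => Y k.succ with hx
    have hproj : ∀ p' : Fin 3 → ℝ, ∀ ρ, Y ∈ Metric.ball (slice0 p') ρ → slice0 x ∈ Metric.ball (slice0 p') ρ := by
      intro p' ρ hY'
      rw [Metric.mem_ball] at hY' ⊢
      refine lt_of_le_of_lt ?_ hY'
      refine (dist_pi_le_iff dist_nonneg).2 fun i => ?_
      refine Fin.cases ?_ (fun k => ?_) i
      · simp [slice0]
      · have := dist_le_pi_dist Y (slice0 p') k.succ
        simpa [slice0, hx] using this
    have hxB : slice0 x ∈ B := ⟨hproj _ _ hY.1, hproj _ _ hY.2⟩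
    have hconn : IsPreconnected B := ((convex_ball _ _).inter (convex_ball _ _)).isPreconnected
    have g1 : AnalyticOnNhd ℝ (Φ p) B := fun Z hZ => (hΦ p hp Z hZ.1).1.1
    have g2 : AnalyticOnNhd ℝ (Φ q) B := fun Z hZ => (hΦ q hq Z hZ.2).1.1
    exact g1.eqOn_of_preconnected_of_eventuallyEq g2 hconn hxB
      (((hΦ p hp _ hxB.1).2.1 x rfl).unique ((hΦ q hq _ hxB.2).2.1 x rfl)) hY
  let φ : (Fin 4 → ℝ) → ℂ := fun Y =>
    if h : ∃ p, p ∈ A3 ∧ Y ∈ Metric.ball (slice0 p) (r p) then Φ h.choose Y else 0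
  have hφ : ∀ p ∈ A3, ∀ Y ∈ Metric.ball (slice0 p) (r p), φ Y = Φ p Y := by
    intro p hp Y hY
    have h : ∃ p, p ∈ A3 ∧ Y ∈ Metric.ball (slice0 p) (r p) := ⟨p, hp, hY⟩
    simp only [φ, dif_pos h]
    exact hcompat _ h.choose_spec.1 p hp Y ⟨h.choose_spec.2, hY⟩
  have hev : ∀ p ∈ A3, ∀ Y ∈ Metric.ball (slice0 p) (r p), φ =ᶠ[𝓝 Y] Φ p := by
    intro p hp Y hY
    filter_upwards [Metric.isOpen_ball.mem_nhds hY] with Z hZ using hφ p hp Z hZ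
  have hsol : ∀ Y ∈ ⋃ p ∈ A3, Metric.ball (slice0 p) (r p), SolAt φ Y := by
    intro Y hY
    simp only [Set.mem_iUnion, exists_prop] at hY
    obtain ⟨p, hp, hY⟩ := hY
    have e := hev p hp Y hY
    obtain ⟨s1, s2, s3, s4⟩ := (hΦ p hp Y hY).1
    have e1 : ∀ i, pd i φ =ᶠ[𝓝 Y] pd i (Φ p) := fun i =>
      e.eventually_nhds.mono fun Z hZ => pd_congr hZ
    refine ⟨s1.congr e.symm, by rw [e.fderiv_eq]; exact s2, ?_, ?_⟩
    · simp only [fun i => pd_congr (i := i) (e1 i), pd_congr e]; exact s3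
    · simp only [pd_congr e]; exact s4
  refine ⟨⋃ p ∈ A3, Metric.ball (slice0 p) (r p), ?_, ?_, φ, ?_, ?_, ?_, ?_, ?_⟩
  · exact isOpen_biUnion fun p _ => Metric.isOpen_ball
  · ext Y
    constructor
    · rintro ⟨hY, hY0⟩
      simp only [Set.mem_iUnion, exists_prop] at hY
      obtain ⟨p, hp, hY⟩ := hY
      refine ⟨fun k => Y k.succ, (hΦ p hp Y hY).2.2, ?_⟩
      ext i
      refine Fin.cases ?_ (fun k => ?_) i
      · have : Y 0 = 0 := hY0
        simp [slice0, this]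
      · simp [slice0]
    · rintro ⟨p, hp, rfl⟩
      refine ⟨?_, by simp [slice0]⟩
      simp only [Set.mem_iUnion, exists_prop]
      exact ⟨p, hp, Metric.mem_ball_self (hr p hp)⟩
  · exact fun Y hY => (hsol Y hY).1
  · exact fun Y hY => (hsol Y hY).2.1
  · intro x hx
    have hm := Metric.mem_ball_self (x := slice0 x) (hr x hx)
    rw [hφ x hx _ hm]
    exact ((hΦ x hx _ hm).2.1 x rfl).boundary
  · exact fun Y hY => (hsol Y hY).2.2.1
  · exact fun Y hY => (hsol Y hY).2.2.2

end
end
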